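/- Let E be a commutative monoid in which every element is idempotent (a unital meet-semilattice), and let X be the set of semicharacters of E. For e ∈ E define 1_e : X → ℂ by 1_e(φ) = φ(e). Then the family (1_e)_{e ∈ E} is linearly independent in ℂ^X: for pairwise distinct e₁, …, eₙ ∈ E and λ ∈ ℂⁿ, if Σᵢ λᵢ·1_{eᵢ} is the zero function on X then λ₁ = … = λₙ = 0. -/

import Mathlib

/-- For a unital meet-semilattice `E` (a commutative monoid of idempotents), the
projections `1_e : X → ℂ`, `1_e(φ) = φ(e)`, indexed by `e ∈ E`, are linearly independent
as functions on the set `X` of semicharacters of `E`: any finite linear combination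
`Σᵢ λᵢ·1_{eᵢ}` with pairwise distinct `eᵢ` that vanishes identically on `X` has all
coefficients zero. -/
theorem stmt7 {E : Type*} [CommMonoid E] (hidem : ∀ e : E, e * e = e)
    {n : ℕ} (es : Fin n → E) (hes : Function.Injective es) (l : Fin n → ℂ)
    (h : ∀ φ : E → Bool, φ 1 = true → (∀ e f : E, φ (e * f) = (φ e && φ f)) →
      ∑ i, l i * (if φ (es i) = true then (1 : ℂ) else 0) = 0) :
    ∀ i, l i = 0 := by
  classical
  have key : ∀ j, ∑ i, l i * (if es j * es i = es j then (1 : ℂ) else 0) = 0 := by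
    intro j
    have := h (fun f => decide (es j * f = es j)) (by simp) (by
      intro e f
      rw [Bool.eq_iff_iff]
      simp only [Bool.and_eq_true, decide_eq_true_eq]
      constructor
      · intro H
        constructor
        · calc es j * e = es j * (e * f) * e := by rw [H]
            _ = es j * ((e * e) * f) := by ac_rfl
            _ = es j := by rw [hidem, H]
        · calc es j * f = es j * (e * f) * f := by rw [H]
            _ = es j * (e * (f * f)) := by ac_rfl
            _ = es j := by rw [hidem, H]
      · rintro ⟨h1, h2⟩
        rw [← mul_assoc, h1, h2])
    simpa only [decide_eq_true_eq] using this
  let r : Fin n → Fin n → Prop := fun i j => es j * es i = es j ∧ i ≠ j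
  have anti : ∀ i j, es j * es i = es j → es i * es j = es i → i = j := by
    intro i j h1 h2
    apply hes
    rw [← h1, mul_comm, h2]
  haveI : IsTrans (Fin n) r := ⟨by
    rintro a b c ⟨h1, h2⟩ ⟨h3, h4⟩
    refine ⟨by rw [← h3, mul_assoc, h1], ?_⟩
    rintro rfl
    exact h2 (anti _ _ h1 h3)⟩
  haveI : Std.Irrefl r := ⟨fun a ha => ha.2 rfl⟩
  have wf : WellFounded r := Finite.wellFounded_of_trans_of_irrefl r
  intro j
  induction j using wf.induction with
  | _ j ih =>
    have hk := key j
    rw [Finset.sum_eq_single j] at hk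
    · simpa [hidem] using hk
    · intro i _ hij
      by_cases hc : es j * es i = es j
      · rw [ih i ⟨hc, hij⟩, zero_mul]
      · simp [hc]
    · simp
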